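/- Let G be a connected graph that is not a cycle, with m ≥ 1 edges, n vertices, h heavy edges, and ℓ leaves. If every heavy vertex of G is adjacent to at least three light vertices, then P(G) = ℓ + m − h − n. -/

import Mathlib

/-!
In a spanning forest, components and edges together number `n`, so `n - P(G)` is the maximum number
of edges of a linear forest in `G`. This maximum is `e(L) + 2 * |H|`, where `H` and `L` are the sets
of heavy and light vertices and `e(L)` counts the edges inside `L`. It is an upper bound because a
linear forest has at most two edges at each vertex of `H` and every other edge lies inside `L`. It
is attained greedily. A cycle of light vertices would be all of `G`, so `G[L]` is a linear forest. A
heavy vertex not yet used has three light neighbours, each of degree at most one in the current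
forest, and as a path has only two ends, two of them lie on different paths, which are joined
through the heavy vertex.

Counting the pairs of a light vertex and an edge at it gives `m + e(L) = h + ∑ v ∈ L, deg v`, and
since light vertices have degree one or two, that sum is `2 * |L| - ℓ`.
-/

namespace PaperPC

open SimpleGraph

variable {V : Type*}

/-- The degree of a vertex, via the cardinality of its neighbor set. -/
noncomputable def ndeg (G : SimpleGraph V) (v : V) : ℕ := (G.neighborSet v).ncard

/-- A linear forest: an acyclic graph of maximum degree at most 2,
i.e. a vertex-disjoint union of paths.  A spanning linear subforest of `G`
is exactly a path covering of `G` (isolated vertices are one-vertex paths). -/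
def IsLinearForest (H : SimpleGraph V) : Prop :=
  H.IsAcyclic ∧ ∀ v, ndeg H v ≤ 2

/-- The number of paths of a path covering = number of connected components. -/
noncomputable def numPaths (H : SimpleGraph V) : ℕ := Nat.card H.ConnectedComponent

/-- The path covering number `P(G)`. -/
noncomputable def pathCoverNumber (G : SimpleGraph V) : ℕ :=
  sInf {k | ∃ H ≤ G, IsLinearForest H ∧ numPaths H = k}

/-- `H` is a minimum path covering of `G`. -/
def IsMinPathCover (G H : SimpleGraph V) : Prop :=
  H ≤ G ∧ IsLinearForest H ∧ numPaths H = pathCoverNumber G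

open scoped Classical in
/-- The path sequence of a path covering: the multiset of the numbers of vertices
of its paths (a multiset encodes the nondecreasing ordered sequence). -/
noncomputable def pathSeq [Fintype V] (H : SimpleGraph V) : Multiset ℕ :=
  (Finset.univ : Finset H.ConnectedComponent).val.map fun c => c.supp.ncard

/-- `G` admits a unique path sequence. -/
def UniquePathSequence [Fintype V] (G : SimpleGraph V) : Prop :=
  ∀ H₁ H₂ : SimpleGraph V, IsMinPathCover G H₁ → IsMinPathCover G H₂ →
    pathSeq H₁ = pathSeq H₂

/-- Number of leaves (vertices of degree 1). -/
noncomputable def numLeaves (G : SimpleGraph V) : ℕ := {v | ndeg G v = 1}.ncard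

/-- Number of heavy edges (edges both of whose endpoints have degree > 2). -/
noncomputable def numHeavyEdges (G : SimpleGraph V) : ℕ :=
  {e ∈ G.edgeSet | ∀ v ∈ e, 2 < ndeg G v}.ncard

/-- Number of edges. -/
noncomputable def numEdges (G : SimpleGraph V) : ℕ := G.edgeSet.ncard

/-- A graph is 2-sparse if no two adjacent vertices both have degree > 2. -/
def TwoSparse (G : SimpleGraph V) : Prop :=
  ∀ u v, G.Adj u v → ndeg G u ≤ 2 ∨ ndeg G v ≤ 2

/-- `G` is a path graph. -/
def IsPathGraph (G : SimpleGraph V) : Prop := G.IsTree ∧ ∀ v, ndeg G v ≤ 2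

/-- `G` is a cycle graph. -/
def IsCycleGraph (G : SimpleGraph V) : Prop := G.Connected ∧ ∀ v, ndeg G v = 2

/-- A generalized star: a tree with exactly one heavy vertex (the center) in which
all vines have the same number of vertices (equivalently, all leaves are at the same
distance from the center). -/
def IsGenStar (G : SimpleGraph V) : Prop :=
  G.IsTree ∧ ∃ c k, 2 < ndeg G c ∧ (∀ v, v ≠ c → ndeg G v ≤ 2) ∧
    ∀ v, ndeg G v = 1 → G.dist c v = k

/-- An L(2,1)-labeling. -/
def IsL21Labeling (G : SimpleGraph V) (f : V → ℕ) : Prop :=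
  (∀ u v, G.Adj u v → 2 ≤ Nat.dist (f u) (f v)) ∧
  (∀ u v, G.dist u v = 2 → 1 ≤ Nat.dist (f u) (f v))

/-- `λ(G)`: the least `k` such that `G` has an L(2,1)-labeling with labels in `{0,…,k}`. -/
noncomputable def lambdaNum (G : SimpleGraph V) : ℕ :=
  sInf {k | ∃ f : V → ℕ, IsL21Labeling G f ∧ ∀ v, f v ≤ k}

/-- A λ-labeling: an L(2,1)-labeling with maximum label `λ(G)`. -/
def IsLambdaLabeling (G : SimpleGraph V) (f : V → ℕ) : Prop :=
  IsL21Labeling G f ∧ (∀ v, f v ≤ lambdaNum G) ∧ ∃ v, f v = lambdaNum G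

/-- The set of holes of a labeling: unused labels `h` with `1 ≤ h ≤ λ(G) - 1`. -/
def labHoles (G : SimpleGraph V) (f : V → ℕ) : Set ℕ :=
  {h | 1 ≤ h ∧ h + 1 ≤ lambdaNum G ∧ ∀ v, f v ≠ h}

/-- The hole index `ρ(G)`: minimum number of holes over all λ-labelings. -/
noncomputable def holeIndex (G : SimpleGraph V) : ℕ :=
  sInf {k | ∃ f : V → ℕ, IsLambdaLabeling G f ∧ (labHoles G f).ncard = k}

open scoped Classical in
/-- The island sequence of a labeling: the multiset of cardinalities of the maximal
intervals `[a,b]` of consecutive integers all used by the labeling. -/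
noncomputable def islandSeq [Fintype V] (G : SimpleGraph V) (f : V → ℕ) : Multiset ℕ :=
  (((Finset.range (lambdaNum G + 1)) ×ˢ (Finset.range (lambdaNum G + 1))).filter
    (fun q => q.1 ≤ q.2 ∧ (∀ x ∈ Finset.Icc q.1 q.2, ∃ v, f v = x) ∧
      (q.1 = 0 ∨ ∀ v, f v ≠ q.1 - 1) ∧ ∀ v, f v ≠ q.2 + 1)).val.map
    fun q => q.2 - q.1 + 1

/-- `G` admits (at least) two distinct island sequences. -/
def MultipleIslandSequences [Fintype V] (G : SimpleGraph V) : Prop :=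
  ∃ f g : V → ℕ, IsLambdaLabeling G f ∧ IsLambdaLabeling G g ∧
    (labHoles G f).ncard = holeIndex G ∧ (labHoles G g).ncard = holeIndex G ∧
    islandSeq G f ≠ islandSeq G g

/-- A vine: a maximal path one of whose endpoints (`a`) is a leaf and all of whose
vertices are light.  Maximality: any light vertex adjacent to the other end already
lies on the path. -/
def IsVine (G : SimpleGraph V) {a b : V} (p : G.Walk a b) : Prop :=
  p.IsPath ∧ ndeg G a = 1 ∧ (∀ v ∈ p.support, ndeg G v ≤ 2) ∧
  ∀ c, G.Adj b c → ndeg G c ≤ 2 → c ∈ p.support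

/-- A vine with center `v`: the (heavy) vertex adjacent to the non-leaf end of the vine. -/
def IsVineWithCenter (G : SimpleGraph V) {a b : V} (p : G.Walk a b) (v : V) : Prop :=
  IsVine G p ∧ G.Adj b v ∧ 2 < ndeg G v

/-- The matching number of the subgraph of `G` induced by `S`. -/
noncomputable def matchingNumberOn (G : SimpleGraph V) (S : Set V) : ℕ :=
  sSup {k | ∃ M : Set (Sym2 V), M ⊆ G.edgeSet ∧ (∀ e ∈ M, ∀ v ∈ e, v ∈ S) ∧
    (∀ e ∈ M, ∀ f ∈ M, e ≠ f → ∀ v, v ∈ e → v ∉ f) ∧ M.ncard = k}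

/-- Labels used in the family `F`: `A`, or `B k` where `k` records the number of
vertices of each vine of the labeled generalized star that produced the label. -/
inductive Lab | A | B (k : ℕ)

/-- A labeled generalized star with center `c` whose vines have `k` vertices each
(equivalently, every leaf is at distance `k` from `c`); the degenerate case
`deg c = 2` is the convention regarding a path of length `2k` as a labeled
generalized star with two vines.  The neighbors of the center are labeled `B k`,
the other non-leaf vertices (and the center) are labeled `A`, leaves are unlabeled. -/
def IsLGenStar {W : Type*} (H : SimpleGraph W) (c : W) (k : ℕ)
    (lab : W → Option Lab) : Prop :=
  H.IsTree ∧ 2 ≤ ndeg H c ∧ (∀ v, v ≠ c → ndeg H v ≤ 2) ∧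
  (∀ v, ndeg H v = 1 → H.dist c v = k) ∧
  lab c = some Lab.A ∧
  (∀ v, H.Adj c v → lab v = some (Lab.B k)) ∧
  (∀ v, v ≠ c → ¬H.Adj c v → ndeg H v = 1 → lab v = none) ∧
  (∀ v, v ≠ c → ¬H.Adj c v → 2 ≤ ndeg H v → lab v = some Lab.A)

/-- A labeled path: a path with at least three vertices, non-leaf vertices labeled `A`. -/
def IsLPath {W : Type*} (H : SimpleGraph W) (lab : W → Option Lab) : Prop :=
  H.IsTree ∧ (∀ v, ndeg H v ≤ 2) ∧ 3 ≤ Nat.card W ∧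
  (∀ v, ndeg H v = 1 → lab v = none) ∧
  ∀ v, 2 ≤ ndeg H v → lab v = some Lab.A

/-- The induced subgraph of `T` on `s` is a labeled generalized star. -/
def LGenStarOn (T : SimpleGraph V) (s : Set V) (c : V) (k : ℕ)
    (lab : V → Option Lab) : Prop :=
  ∃ hc : c ∈ s, IsLGenStar (T.induce s) ⟨c, hc⟩ k fun v => lab v.1

/-- The induced subgraph of `T` on `s` is a labeled path. -/
def LPathOn (T : SimpleGraph V) (s : Set V) (lab : V → Option Lab) : Prop :=
  IsLPath (T.induce s) fun v => lab v.1

/-- The family `F` of labeled trees, realized as induced subgraphs (on vertex sets `s`)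
of an ambient graph `T`:  start from a labeled generalized star with at least three
vines or from a labeled path, and repeatedly attach, via a single new edge, a labeled
generalized star with at least three vines at a vertex labeled `A` (Type-1), a labeled
path by one of its non-leaf vertices at a vertex labeled `A` (Type-2), or a labeled
generalized star whose vines have the same number of vertices `k` as those of the star
that labeled `u` with `B k`, at a vertex `u` labeled `B k` (Type-3). -/
inductive InF (T : SimpleGraph V) : Set V → (V → Option Lab) → Prop
  | base_star (s : Set V) (c : V) (k : ℕ) (lab : V → Option Lab) :
      LGenStarOn T s c k lab → 3 ≤ {w ∈ s | T.Adj c w}.ncard → InF T s lab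
  | base_path (s : Set V) (lab : V → Option Lab) :
      LPathOn T s lab → InF T s lab
  | type1 (s : Set V) (lab : V → Option Lab) (t : Set V) (lab' : V → Option Lab)
      (u c : V) (k : ℕ) :
      InF T s lab → Disjoint s t → u ∈ s → c ∈ t → lab u = some Lab.A →
      LGenStarOn T t c k lab' → 3 ≤ {w ∈ t | T.Adj c w}.ncard →
      (∀ x ∈ s, ∀ y ∈ t, (T.Adj x y ↔ x = u ∧ y = c)) →
      (∀ x ∈ s, lab' x = lab x) →
      InF T (s ∪ t) lab'
  | type2 (s : Set V) (lab : V → Option Lab) (t : Set V) (lab' : V → Option Lab)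
      (u v : V) :
      InF T s lab → Disjoint s t → u ∈ s → v ∈ t → lab u = some Lab.A →
      LPathOn T t lab' → 2 ≤ {w ∈ t | T.Adj v w}.ncard →
      (∀ x ∈ s, ∀ y ∈ t, (T.Adj x y ↔ x = u ∧ y = v)) →
      (∀ x ∈ s, lab' x = lab x) →
      InF T (s ∪ t) lab'
  | type3 (s : Set V) (lab : V → Option Lab) (t : Set V) (lab' : V → Option Lab)
      (u c : V) (k : ℕ) :
      InF T s lab → Disjoint s t → u ∈ s → c ∈ t → lab u = some (Lab.B k) →
      LGenStarOn T t c k lab' →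
      (∀ x ∈ s, ∀ y ∈ t, (T.Adj x y ↔ x = u ∧ y = c)) →
      (∀ x ∈ s, lab' x = lab x) →
      InF T (s ∪ t) lab'

/-- `G` is obtained from the tree `T` by expanding each edge of `T` into a complete
graph of arbitrary order: there is an embedding `ι` of the vertices of `T` and an
assignment `b` of a block of vertices of `G` to each edge of `T` such that an original
vertex lies in the block of an edge iff it is an endpoint of that edge, blocks of
distinct edges meet only in original vertices, every vertex of `G` lies in some block,
and two distinct vertices of `G` are adjacent iff they lie in a common block. -/
def IsBlockExpansion {U W : Type*} (T : SimpleGraph U) (G : SimpleGraph W) : Prop :=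
  ∃ (ι : U ↪ W) (b : Sym2 U → Set W),
    (∀ (u : U), ∀ e ∈ T.edgeSet, (ι u ∈ b e ↔ u ∈ e)) ∧
    (∀ e ∈ T.edgeSet, ∀ f ∈ T.edgeSet, e ≠ f → b e ∩ b f ⊆ Set.range ι) ∧
    (∀ w : W, ∃ e ∈ T.edgeSet, w ∈ b e) ∧
    (∀ x y : W, G.Adj x y ↔ x ≠ y ∧ ∃ e ∈ T.edgeSet, x ∈ b e ∧ y ∈ b e)

section Reachability

variable {K : SimpleGraph V}

lemma mem_of_reachable_of_forall_adj {s : Set V} (hs : ∀ x y, K.Adj x y → x ∈ s → y ∈ s)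
    {x y : V} (hxy : K.Reachable x y) (hx : x ∈ s) : y ∈ s := by
  obtain ⟨p⟩ := hxy
  by_contra hy
  obtain ⟨d, -, hfst, hsnd⟩ := p.exists_boundary_dart s hx hy
  exact hsnd (hs _ _ d.adj hfst)

lemma reachable_or_of_sup_edge {u v x y : V} (h : (K ⊔ edge u v).Reachable x y) :
    K.Reachable x y ∨ (K.Reachable x u ∧ K.Reachable v y) ∨
      (K.Reachable x v ∧ K.Reachable u y) := by
  refine mem_of_reachable_of_forall_adj (s := {z | K.Reachable x z ∨
    (K.Reachable x u ∧ K.Reachable v z) ∨ (K.Reachable x v ∧ K.Reachable u z)})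
    (fun a b hab ha => ?_) h (Or.inl (Reachable.refl x))
  simp only [Set.mem_ofPred_eq] at ha ⊢
  rcases hab with hab | hab
  · exact ha.imp (·.trans hab.reachable)
      (Or.imp (And.imp_right (·.trans hab.reachable)) (And.imp_right (·.trans hab.reachable)))
  · have hrefl := fun z => Reachable.refl (G := K) z
    rcases ((edge_adj ..).1 hab).1 with ⟨rfl, rfl⟩ | ⟨rfl, rfl⟩ <;> tauto

lemma mem_verts_of_reachable [Finite V] {H : K.Subgraph}
    (hH : ∀ v ∈ H.verts, ndeg K v ≤ (H.neighborSet v).ncard) {x y : V} (hxy : K.Reachable x y)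
    (hx : x ∈ H.verts) : y ∈ H.verts := by
  refine mem_of_reachable_of_forall_adj (fun a b hab ha => ?_) hxy hx
  have hnbr : H.neighborSet a = K.neighborSet a :=
    Set.eq_of_subset_of_ncard_le (H.neighborSet_subset a) (hH a ha) (Set.toFinite _)
  have hb : b ∈ H.neighborSet a := hnbr ▸ hab
  exact H.edge_vert hb.symm

end Reachability

section Degrees

variable {K : SimpleGraph V}

lemma ndeg_sup_edge_of_ne {u v x : V} (hu : x ≠ u) (hv : x ≠ v) :
    ndeg (K ⊔ edge u v) x = ndeg K x := by
  unfold ndeg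
  congr 1
  ext y
  simp [edge_adj, hu, hv]

variable [Finite V]

lemma ndeg_sup_edge_le (u v x : V) : ndeg (K ⊔ edge u v) x ≤ ndeg K x + 1 := by
  obtain ⟨a, ha⟩ : ∃ a, (K ⊔ edge u v).neighborSet x ⊆ insert a (K.neighborSet x) := by
    by_cases hx : x = u
    · refine ⟨v, fun y => ?_⟩
      simp only [mem_neighborSet, sup_adj, edge_adj, Set.mem_insert_iff]
      grind
    · refine ⟨u, fun y => ?_⟩
      simp only [mem_neighborSet, sup_adj, edge_adj, Set.mem_insert_iff]
      grind
  exact (Set.ncard_le_ncard ha (Set.toFinite _)).trans (Set.ncard_insert_le ..)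

lemma ndeg_mono {H : SimpleGraph V} (h : H ≤ K) (v : V) : ndeg H v ≤ ndeg K v :=
  Set.ncard_le_ncard (fun _ hx => h hx) (Set.toFinite _)

lemma ndeg_lt_ndeg {H : SimpleGraph V} (h : H ≤ K) {v w : V} (hK : K.Adj v w)
    (hH : ¬ H.Adj v w) : ndeg H v < ndeg K v :=
  Set.ncard_lt_ncard ⟨fun _ hx => h hx, fun hle => hH (hle hK)⟩ (Set.toFinite _)

lemma ncard_neighborSet_le_ndeg (H : K.Subgraph) (v : V) : (H.neighborSet v).ncard ≤ ndeg K v :=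
  Set.ncard_le_ncard (H.neighborSet_subset v) (Set.toFinite _)

lemma ndeg_pos_iff {v : V} : 0 < ndeg K v ↔ ∃ w, K.Adj v w :=
  Set.ncard_pos (Set.toFinite _)

lemma one_le_ndeg (hc : K.Connected) (hm : 1 ≤ numEdges K) (v : V) : 1 ≤ ndeg K v := by
  obtain ⟨e, he⟩ : K.edgeSet.Nonempty := (Set.ncard_pos (Set.toFinite _)).1 hm
  induction e with | _ x y
  have : Nontrivial V := ⟨x, y, K.ne_of_adj he⟩
  exact ndeg_pos_iff.2 (hc.preconnected.exists_adj_of_nontrivial v)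

end Degrees

section MaxDegreeTwo

variable {K : SimpleGraph V}

lemma eq_or_eq_or_ncard_neighborSet_toSubgraph_eq_two {u v x : V} {p : K.Walk u v}
    (hp : p.IsPath) (hx : x ∈ p.support) :
    x = u ∨ x = v ∨ (p.toSubgraph.neighborSet x).ncard = 2 := by
  obtain ⟨i, rfl, hi⟩ := Walk.mem_support_iff_exists_getVert.1 hx
  rcases i.eq_zero_or_pos with rfl | h0
  · exact Or.inl p.getVert_zero
  rcases hi.eq_or_lt with rfl | hlt
  · exact Or.inr (Or.inl p.getVert_length)
  · exact Or.inr (Or.inr (hp.ncard_neighborSet_toSubgraph_internal_eq_two h0.ne' hlt))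

variable [Finite V]

lemma exists_two_lt_ndeg_of_isCycle (hc : K.Connected) (hnc : ¬ IsCycleGraph K) {a : V}
    {p : K.Walk a a} (hp : p.IsCycle) : ∃ v ∈ p.support, 2 < ndeg K v := by
  by_contra! hlight
  have htwo : ∀ v ∈ p.support, (p.toSubgraph.neighborSet v).ncard = 2 :=
    fun v hv => hp.ncard_neighborSet_toSubgraph_eq_two hv
  simp only [← p.mem_verts_toSubgraph] at hlight htwo
  have hverts : ∀ v, v ∈ p.toSubgraph.verts := fun v =>
    mem_verts_of_reachable (fun x hx => (hlight x hx).trans (htwo x hx).ge)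
      (hc.preconnected a v) p.start_mem_verts_toSubgraph
  exact hnc ⟨hc, fun v => le_antisymm (hlight v (hverts v))
    ((htwo v (hverts v)).ge.trans (ncard_neighborSet_le_ndeg _ v))⟩

lemma mem_support_of_reachable_of_isPath (hK : ∀ v, ndeg K v ≤ 2) {u v x : V} (huv : u ≠ v)
    (hu : ndeg K u ≤ 1) (hv : ndeg K v ≤ 1) {p : K.Walk u v} (hp : p.IsPath)
    (hx : K.Reachable u x) : x ∈ p.support := by
  have hnil : ¬ p.Nil := Walk.not_nil_of_ne huv
  refine p.mem_verts_toSubgraph.1 <|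
    mem_verts_of_reachable (fun y hy => ?_) hx p.start_mem_verts_toSubgraph
  rcases eq_or_eq_or_ncard_neighborSet_toSubgraph_eq_two hp (p.mem_verts_toSubgraph.1 hy)
    with rfl | rfl | hy
  · rwa [hp.neighborSet_toSubgraph_startpoint hnil, Set.ncard_singleton]
  · rwa [hp.neighborSet_toSubgraph_endpoint hnil, Set.ncard_singleton]
  · exact hy ▸ hK y

lemma exists_not_reachable_of_ndeg_le_one (hK : ∀ v, ndeg K v ≤ 2) {s : Set V}
    (hs : ∀ w ∈ s, ndeg K w ≤ 1) (hcard : 3 ≤ s.ncard) :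
    ∃ u ∈ s, ∃ v ∈ s, ¬ K.Reachable u v := by
  by_contra! hreach
  obtain ⟨a, ha, b, hb, c, hc, hab, hac, hbc⟩ := (Set.two_lt_ncard (Set.toFinite s)).1 hcard
  obtain ⟨p, hp⟩ := (hreach a ha b hb).exists_isPath
  have hmem := mem_support_of_reachable_of_isPath hK hab (hs a ha) (hs b hb) hp (hreach a ha c hc)
  have htwo := ((eq_or_eq_or_ncard_neighborSet_toSubgraph_eq_two hp hmem).resolve_left
    hac.symm).resolve_left hbc.symm
  have := ncard_neighborSet_le_ndeg p.toSubgraph c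
  have := hs c hc
  omega

end MaxDegreeTwo

section Components

lemma numPaths_bot : numPaths (⊥ : SimpleGraph V) = Nat.card V :=
  (Nat.card_eq_of_bijective (⊥ : SimpleGraph V).connectedComponentMk
    ⟨fun _ _ hxy => by simpa using hxy, Quot.mk_surjective⟩).symm

variable [Finite V] {K : SimpleGraph V} {u v : V}

lemma numEdges_sup_edge (hne : u ≠ v) (h : ¬ K.Adj u v) :
    numEdges (K ⊔ edge u v) = numEdges K + 1 := by
  rw [numEdges, edgeSet_sup, edgeSet_edge_of_ne hne, Set.union_singleton,
    Set.ncard_insert_of_notMem (by simpa using h) (Set.toFinite _), numEdges]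

lemma numPaths_sup_edge (h : ¬ K.Reachable u v) :
    numPaths (K ⊔ edge u v) + 1 = numPaths K := by
  have huv : (K ⊔ edge u v).Adj u v :=
    Or.inr ((edge_adj ..).2 ⟨Or.inl ⟨rfl, rfl⟩, fun huv => h (huv ▸ Reachable.refl u)⟩)
  let join : ({K.connectedComponentMk v}ᶜ : Set K.ConnectedComponent) →
      (K ⊔ edge u v).ConnectedComponent := fun c => c.1.map (Hom.ofLE le_sup_left)
  have hinj : Function.Injective join := by
    rintro ⟨c, hc⟩ ⟨d, hd⟩ hcd
    induction c using ConnectedComponent.ind with | _ x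
    induction d using ConnectedComponent.ind with | _ y
    refine Subtype.ext (ConnectedComponent.sound ?_)
    rcases reachable_or_of_sup_edge (ConnectedComponent.exact hcd) with hxy | ⟨-, hvy⟩ | ⟨hxv, -⟩
    · exact hxy
    · exact absurd (ConnectedComponent.sound hvy.symm) hd
    · exact absurd (ConnectedComponent.sound hxv) hc
  have hsurj : Function.Surjective join := by
    intro c
    induction c using ConnectedComponent.ind with | _ x
    by_cases hx : K.Reachable x v
    · exact ⟨⟨K.connectedComponentMk u, fun huv' => h (ConnectedComponent.exact huv')⟩,
        ConnectedComponent.sound (huv.reachable.trans (hx.symm.mono le_sup_left))⟩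
    · exact ⟨⟨K.connectedComponentMk x, fun hxv => hx (ConnectedComponent.exact hxv)⟩, rfl⟩
  rw [numPaths, numPaths, ← Nat.card_eq_of_bijective join ⟨hinj, hsurj⟩, Nat.card_coe_set_eq,
    add_comm, ← Set.ncard_singleton (K.connectedComponentMk v), Set.ncard_add_ncard_compl]

lemma numPaths_add_numEdges (hK : K.IsAcyclic) : numPaths K + numEdges K = Nat.card V := by
  induction hn : numEdges K generalizing K with
  | zero =>
    rw [numEdges, Set.ncard_eq_zero (Set.toFinite _), edgeSet_eq_empty] at hn
    rw [hn, numPaths_bot]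
    rfl
  | succ n ih =>
    obtain ⟨e, he⟩ : K.edgeSet.Nonempty := (Set.ncard_pos (Set.toFinite _)).1 (by
      rw [← numEdges, hn]; exact n.succ_pos)
    induction e with | _ u v
    have hcut : ¬ (K.deleteEdges {s(u, v)}).Reachable u v :=
      isBridge_iff.1 (isAcyclic_iff_forall_isBridge.1 hK he)
    have hsup : K.deleteEdges {s(u, v)} ⊔ edge u v = K :=
      sdiff_sup_cancel ((edge_le_iff K).2 (Or.inr he))
    have hedges := numEdges_sup_edge (K.ne_of_adj he) fun h => hcut h.reachable
    have hpaths := numPaths_sup_edge hcut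
    rw [hsup] at hedges hpaths
    have := ih (K := K.deleteEdges {s(u, v)}) (hK.anti (deleteEdges_le _)) (by omega)
    omega

end Components

section PathCovers

variable [Finite V] {F G : SimpleGraph V}

lemma IsLinearForest.sup_edge {u v : V} (hF : IsLinearForest F) (huv : ¬ F.Reachable u v)
    (hu : ndeg F u ≤ 1) (hv : ndeg F v ≤ 1) : IsLinearForest (F ⊔ edge u v) := by
  refine ⟨hF.1.sup_edge_of_not_reachable huv, fun x => ?_⟩
  have hle := ndeg_sup_edge_le (K := F) u v x
  by_cases hx : x = u ∨ x = v
  · rcases hx with rfl | rfl <;> omega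
  · rw [not_or] at hx
    exact (ndeg_sup_edge_of_ne hx.1 hx.2).trans_le (hF.2 x)

lemma pathCoverNumber_add_numEdges (hFG : F ≤ G) (hF : IsLinearForest F)
    (hmax : ∀ H ≤ G, IsLinearForest H → numEdges H ≤ numEdges F) :
    pathCoverNumber G + numEdges F = Nat.card V := by
  have hforest := numPaths_add_numEdges hF.1
  have hmin : pathCoverNumber G = numPaths F := by
    refine IsLeast.csInf_eq ⟨⟨F, hFG, hF, rfl⟩, ?_⟩
    rintro _ ⟨H, hHG, hH, rfl⟩
    have := numPaths_add_numEdges hH.1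
    have := hmax H hHG hH
    omega
  rw [hmin, hforest]

end PathCovers

section Counting

open scoped Finset

/-- The number of edges of `K` with both endpoints in `S`, i.e. the size of `K[S]`. It generalizes
`numHeavyEdges` to arbitrary vertex sets. -/
noncomputable def numEdgesWithin (K : SimpleGraph V) (S : Set V) : ℕ :=
  {e ∈ K.edgeSet | ∀ v ∈ e, v ∈ S}.ncard

open scoped Classical in
lemma ite_forall_notMem_add_card_filter_mem (S : Finset V) {x y : V} (hxy : x ≠ y) :
    (if ∀ v ∈ s(x, y), v ∈ (S : Set V)ᶜ then 1 else 0) + #{v ∈ S | v ∈ s(x, y)} =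
      1 + if ∀ v ∈ s(x, y), v ∈ (S : Set V) then 1 else 0 := by
  have hinter : ({v ∈ S | v ∈ s(x, y)} : Finset V) = {x, y} ∩ S := by
    ext v
    simp [and_comm]
  rw [hinter]
  by_cases hx : x ∈ S <;> by_cases hy : y ∈ S <;> simp [hx, hy, hxy]

variable [Finite V]

lemma numEdges_add_numEdgesWithin_eq (K : SimpleGraph V) (S : Finset V) :
    numEdges K + numEdgesWithin K S = numEdgesWithin K (S : Set V)ᶜ + ∑ v ∈ S, ndeg K v := by
  classical
  have := Fintype.ofFinite V
  have hdeg : ∑ v ∈ S, ndeg K v = ∑ e ∈ K.edgeFinset, #{v ∈ S | v ∈ e} := by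
    refine Eq.trans (Finset.sum_congr rfl fun v _ => ?_)
      (Finset.sum_card_bipartiteAbove_eq_sum_card_bipartiteBelow fun v e => v ∈ e)
    rw [ndeg, Set.ncard_eq_toFinset_card', ← neighborFinset, card_neighborFinset_eq_degree,
      ← card_incidenceFinset_eq_degree, incidenceFinset_eq_filter, Finset.bipartiteAbove]
  have hwithin : ∀ T : Set V, numEdgesWithin K T =
      ∑ e ∈ K.edgeFinset, if ∀ v ∈ e, v ∈ T then 1 else 0 := fun T => by
    rw [numEdgesWithin, ← Finset.card_filter, ← Set.ncard_coe_finset]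
    simp
  have hedges : numEdges K = ∑ e ∈ K.edgeFinset, 1 := by
    rw [numEdges, Finset.sum_const, smul_eq_mul, mul_one, ← Set.ncard_coe_finset, coe_edgeFinset]
  rw [hdeg, hwithin, hwithin, hedges, ← Finset.sum_add_distrib, ← Finset.sum_add_distrib]
  refine Finset.sum_congr rfl fun e he => ?_
  induction e with | _ x y
  convert (ite_forall_notMem_add_card_filter_mem S (K.ne_of_adj (mem_edgeFinset.1 he))).symm

lemma numEdgesWithin_mono {H K : SimpleGraph V} (h : H ≤ K) (S : Set V) :
    numEdgesWithin H S ≤ numEdgesWithin K S :=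
  Set.ncard_le_ncard (fun _ he => ⟨edgeSet_mono h he.1, he.2⟩) (Set.toFinite _)

lemma numEdges_le_of_ndeg_le {F G : SimpleGraph V} (hFG : F ≤ G) {S : Finset V} {d : ℕ}
    (hd : ∀ v ∈ S, ndeg F v ≤ d) :
    numEdges F ≤ numEdgesWithin G (S : Set V)ᶜ + S.card * d :=
  calc numEdges F
    _ ≤ numEdges F + numEdgesWithin F S := Nat.le_add_right ..
    _ = numEdgesWithin F (S : Set V)ᶜ + ∑ v ∈ S, ndeg F v := numEdges_add_numEdgesWithin_eq F S
    _ ≤ numEdgesWithin G (S : Set V)ᶜ + S.card * d :=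
      Nat.add_le_add (numEdgesWithin_mono hFG _) (Finset.sum_le_card_nsmul S _ d hd)

end Counting

section Greedy

variable {F G : SimpleGraph V}

lemma induce_spanningCoe_adj_iff {S : Set V} {x y : V} :
    (G.induce S).spanningCoe.Adj x y ↔ G.Adj x y ∧ x ∈ S ∧ y ∈ S := by
  simp

lemma numEdges_induce_spanningCoe (G : SimpleGraph V) (S : Set V) :
    numEdges (G.induce S).spanningCoe = numEdgesWithin G S := by
  rw [numEdges, numEdgesWithin]
  congr 1
  ext e
  induction e with | _ x y
  simp

lemma ndeg_induce_spanningCoe_of_notMem {S : Set V} {v : V} (hv : v ∉ S) :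
    ndeg (G.induce S).spanningCoe v = 0 := by
  have hempty : (G.induce S).spanningCoe.neighborSet v = ∅ :=
    Set.eq_empty_of_forall_notMem fun w hw => hv (induce_spanningCoe_adj_iff.1 hw).2.1
  rw [ndeg, hempty, Set.ncard_empty]

lemma isAcyclic_induce_spanningCoe {S : Set V}
    (hcyc : ∀ a (p : G.Walk a a), p.IsCycle → ∃ v ∈ p.support, v ∉ S) :
    (G.induce S).spanningCoe.IsAcyclic := by
  intro a p hp
  have hle : (G.induce S).spanningCoe ≤ G := spanningCoe_induce_le G S
  obtain ⟨v, hv, hvS⟩ := hcyc a (p.mapLe hle) (hp.mapLe hle)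
  rw [Walk.support_mapLe_eq_support] at hv
  obtain ⟨w, hvw⟩ := adj_of_mem_walk_support p hp.not_nil hv
  exact hvS (induce_spanningCoe_adj_iff.1 hvw.2).2.1

variable [Finite V]

lemma not_reachable_of_ndeg_eq_zero {v w : V} (hv : ndeg F v = 0) (hne : v ≠ w) :
    ¬ F.Reachable v w := fun h => by
  refine hne (mem_of_reachable_of_forall_adj (s := {v}) (fun x y hxy hx => ?_) h rfl).symm
  exact absurd hv (ndeg_pos_iff.2 ⟨y, hx ▸ hxy⟩).ne'

lemma IsLinearForest.exists_numEdges_eq_add_two (hF : IsLinearForest F) (hFG : F ≤ G) {v : V}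
    (hv : ndeg F v = 0) {W : Set V} (hadj : ∀ w ∈ W, G.Adj v w) (hW : ∀ w ∈ W, ndeg F w ≤ 1)
    (hcard : 3 ≤ W.ncard) :
    ∃ H ≤ G, IsLinearForest H ∧ numEdges H = numEdges F + 2 ∧
      ∀ x, x ≠ v → x ∉ W → ndeg H x = ndeg F x := by
  obtain ⟨w₁, hw₁, w₂, hw₂, hreach⟩ := exists_not_reachable_of_ndeg_le_one hF.2 hW hcard
  have hne : w₁ ≠ w₂ := fun h => hreach (h ▸ Reachable.refl w₁)
  have hne₁ := (hadj w₁ hw₁).ne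
  have hne₂ := (hadj w₂ hw₂).ne
  have hreach₁ : ¬ F.Reachable v w₁ := not_reachable_of_ndeg_eq_zero hv hne₁
  have hreach₂ : ¬ (F ⊔ edge v w₁).Reachable v w₂ := fun h => by
    rcases reachable_or_of_sup_edge h with h | ⟨-, h⟩ | ⟨h, -⟩
    exacts [not_reachable_of_ndeg_eq_zero hv hne₂ h, hreach h, hreach₁ h]
  have hdeg_v : ndeg (F ⊔ edge v w₁) v ≤ 1 :=
    (ndeg_sup_edge_le v w₁ v).trans_eq (congrArg (· + 1) hv)
  have hdeg_w₂ : ndeg (F ⊔ edge v w₁) w₂ ≤ 1 :=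
    (ndeg_sup_edge_of_ne hne₂.symm hne.symm).trans_le (hW w₂ hw₂)
  refine ⟨F ⊔ edge v w₁ ⊔ edge v w₂, ?_, ?_, ?_, fun x hxv hxW => ?_⟩
  · exact sup_le (sup_le hFG ((edge_le_iff G).2 (Or.inr (hadj w₁ hw₁))))
      ((edge_le_iff G).2 (Or.inr (hadj w₂ hw₂)))
  · exact (hF.sup_edge hreach₁ (hv.trans_le zero_le_one) (hW w₁ hw₁)).sup_edge hreach₂ hdeg_v
      hdeg_w₂
  · rw [numEdges_sup_edge hne₂ fun h => hreach₂ h.reachable,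
      numEdges_sup_edge hne₁ fun h => hreach₁ h.reachable]
  · rw [ndeg_sup_edge_of_ne hxv fun h => hxW (h ▸ hw₂),
      ndeg_sup_edge_of_ne hxv fun h => hxW (h ▸ hw₁)]

lemma exists_isLinearForest_numEdges_eq {S : Set V} (hS : ∀ v ∈ S, ndeg G v ≤ 2)
    (hcyc : ∀ a (p : G.Walk a a), p.IsCycle → ∃ v ∈ p.support, v ∉ S) {T : Finset V}
    (hTS : ∀ v ∈ T, v ∉ S) (hT : ∀ v ∈ T, 3 ≤ {w | G.Adj v w ∧ w ∈ S}.ncard) :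
    ∃ F ≤ G, IsLinearForest F ∧ numEdges F = numEdgesWithin G S + 2 * T.card ∧
      ∀ v ∉ S, v ∉ T → ndeg F v = 0 := by
  classical
  induction T using Finset.induction_on with
  | empty =>
    have hle : (G.induce S).spanningCoe ≤ G := spanningCoe_induce_le G S
    refine ⟨_, hle, ⟨isAcyclic_induce_spanningCoe hcyc, fun v => ?_⟩,
      numEdges_induce_spanningCoe G S, fun v hv _ => ndeg_induce_spanningCoe_of_notMem hv⟩
    by_cases hv : v ∈ S
    · exact (ndeg_mono hle v).trans (hS v hv)
    · exact (ndeg_induce_spanningCoe_of_notMem hv).trans_le zero_le_two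
  | insert v T hvT ih =>
    rw [Finset.forall_mem_insert] at hTS hT
    obtain ⟨F, hFG, hF, hedges, hzero⟩ := ih hTS.2 hT.2
    have hv : ndeg F v = 0 := hzero v hTS.1 hvT
    have hW : ∀ w ∈ {w | G.Adj v w ∧ w ∈ S}, ndeg F w ≤ 1 := fun w hw => by
      have hwv : ¬ F.Adj w v := fun h => absurd hv (ndeg_pos_iff.2 ⟨w, h.symm⟩).ne'
      have := ndeg_lt_ndeg hFG hw.1.symm hwv
      have := hS w hw.2
      omega
    obtain ⟨H, hHG, hH, hHedges, hHdeg⟩ :=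
      hF.exists_numEdges_eq_add_two hFG hv (fun w hw => hw.1) hW hT.1
    refine ⟨H, hHG, hH, ?_, fun x hxS hxT => ?_⟩
    · rw [hHedges, hedges, Finset.card_insert_of_notMem hvT]
      omega
    · rw [Finset.mem_insert, not_or] at hxT
      rw [hHdeg x hxT.1 fun hx => hxS hx.2, hzero x hxS hxT.2]

lemma pathCoverNumber_add_numEdgesWithin {T : Finset V} (hlight : ∀ v ∉ T, ndeg G v ≤ 2)
    (hcyc : ∀ a (p : G.Walk a a), p.IsCycle → ∃ v ∈ p.support, v ∈ T)
    (hT : ∀ v ∈ T, 3 ≤ {w | G.Adj v w ∧ w ∉ T}.ncard) :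
    pathCoverNumber G + numEdgesWithin G (T : Set V)ᶜ + 2 * T.card = Nat.card V := by
  obtain ⟨F, hFG, hF, hedges, -⟩ := exists_isLinearForest_numEdges_eq (S := (T : Set V)ᶜ)
    hlight (by simpa using hcyc) (by simp) hT
  rw [add_assoc, ← hedges]
  refine pathCoverNumber_add_numEdges hFG hF fun H hHG hH => ?_
  rw [hedges, mul_comm]
  exact numEdges_le_of_ndeg_le hHG fun v _ => hH.2 v

end Greedy

section HeavyAndLight

variable [Fintype V]

/-- The set of heavy vertices, as a finset so that it can be summed over and inducted on. -/
noncomputable def heavyVerts (G : SimpleGraph V) : Finset V := {v | 2 < ndeg G v}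

/-- The set of light vertices, the complement of `heavyVerts G`. -/
noncomputable def lightVerts (G : SimpleGraph V) : Finset V := {v | ndeg G v ≤ 2}

variable {G : SimpleGraph V}

lemma mem_heavyVerts {v : V} : v ∈ heavyVerts G ↔ 2 < ndeg G v := by
  simp [heavyVerts]

lemma mem_lightVerts {v : V} : v ∈ lightVerts G ↔ ndeg G v ≤ 2 := by
  simp [lightVerts]

lemma coe_lightVerts (G : SimpleGraph V) : (lightVerts G : Set V) = (heavyVerts G : Set V)ᶜ := by
  ext v
  simp [mem_lightVerts, mem_heavyVerts]

lemma card_heavyVerts_add_card_lightVerts (G : SimpleGraph V) :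
    (heavyVerts G).card + (lightVerts G).card = Fintype.card V := by
  simpa [heavyVerts, lightVerts] using
    Finset.card_filter_add_card_filter_not (s := Finset.univ) (fun v => 2 < ndeg G v)

lemma numHeavyEdges_eq_numEdgesWithin (G : SimpleGraph V) :
    numHeavyEdges G = numEdgesWithin G (heavyVerts G) := by
  simp [numHeavyEdges, numEdgesWithin, mem_heavyVerts]

lemma sum_ndeg_lightVerts_add_numLeaves (hpos : ∀ v, 1 ≤ ndeg G v) :
    ∑ v ∈ lightVerts G, ndeg G v + numLeaves G = (lightVerts G).card * 2 := by
  have hleaves : numLeaves G = ∑ v ∈ lightVerts G, if ndeg G v = 1 then 1 else 0 := by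
    rw [← Finset.card_filter, numLeaves, ← Set.ncard_coe_finset]
    congr 1
    ext v
    simp only [Set.mem_ofPred_eq, Finset.coe_filter, mem_lightVerts]
    omega
  rw [hleaves, ← Finset.sum_add_distrib]
  refine Finset.sum_const_nat fun v hv => ?_
  have := hpos v
  rw [mem_lightVerts] at hv
  split_ifs <;> omega

lemma numEdges_add_numEdgesWithin_lightVerts (G : SimpleGraph V) :
    numEdges G + numEdgesWithin G (lightVerts G) =
      numHeavyEdges G + ∑ v ∈ lightVerts G, ndeg G v := by
  rw [numEdges_add_numEdgesWithin_eq, numHeavyEdges_eq_numEdgesWithin, coe_lightVerts, compl_compl]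

theorem pathCoverNumber_formula_general_general (G : SimpleGraph V) (hpos : ∀ v, 1 ≤ ndeg G v)
    (hcyc : ∀ a (p : G.Walk a a), p.IsCycle → ∃ v ∈ p.support, 2 < ndeg G v)
    (hh : ∀ v, 2 < ndeg G v → 3 ≤ {w | G.Adj v w ∧ ndeg G w ≤ 2}.ncard) :
    (pathCoverNumber G : ℤ) =
      numLeaves G + numEdges G - numHeavyEdges G - Fintype.card V := by
  have hcover : pathCoverNumber G + numEdgesWithin G (lightVerts G) + 2 * (heavyVerts G).card =
      Fintype.card V := by
    rw [coe_lightVerts, ← Nat.card_eq_fintype_card]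
    exact pathCoverNumber_add_numEdgesWithin (by simp [mem_heavyVerts])
      (by simpa [mem_heavyVerts] using hcyc) (by simpa [mem_heavyVerts] using hh)
  have hedges := numEdges_add_numEdgesWithin_lightVerts G
  have hdeg := sum_ndeg_lightVerts_add_numLeaves hpos
  have hcard := card_heavyVerts_add_card_lightVerts G
  omega

end HeavyAndLight

/-- **Theorem (Statement 5).** Let `G` be a connected non-cycle graph with `m ≥ 1`
edges, `n` vertices, `h` heavy edges and `ℓ` leaves.  If every heavy vertex of `G` is
adjacent to at least three light vertices, then `P(G) = ℓ + m − h − n`. -/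
theorem pathCoverNumber_formula_general {V : Type*} [Fintype V] (G : SimpleGraph V)
    (hc : G.Connected) (hnc : ¬ IsCycleGraph G) (hm : 1 ≤ numEdges G)
    (hh : ∀ v, 2 < ndeg G v → 3 ≤ {w | G.Adj v w ∧ ndeg G w ≤ 2}.ncard) :
    (pathCoverNumber G : ℤ) =
      numLeaves G + numEdges G - numHeavyEdges G - Fintype.card V := by
  exact pathCoverNumber_formula_general_general G (one_le_ndeg hc hm)
    (fun _ _ hp => exists_two_lt_ndeg_of_isCycle hc hnc hp) hh

end PaperPC
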